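/- Let d ≥ 2, let s be a positive integer, β > −d−s, λ_0,…,λ_{s−1} > 0, and assume given the orthonormal spanning families (Y_ℓ^m) of solid harmonics. Let η : ℝ → ℝ be a C^∞ function with η(u) = 1 for u ∈ [0,1] and η(u) = 0 for u ≥ 2, and for n ≥ 1 define Q_{n,η}^{(β,−s)} f := Σ_{k=0}^{2n} η(k/n) proj_k^{β,−s} f. Then for every s-times continuously differentiable f : ℝ^d × ℝ → ℝ, every x ∈ ℝ^d and every t ∈ [0,1]: f(x,t) − Q_{n,η}^{(β,−s)} f(x,t) = Σ_{m=0}^{s−1} ((t−1)^m/m!) · [∂_t^m f(x,1) − Σ_{k=0}^{2n} η(k/n) Proj_{k−m}[∂_t^m f(·,1)](x)] + (−1)^s ∫_t^1 ((v−t)^{s−1}/(s−1)!) · [∂_t^s f(x,v) − Σ_{k=0}^{2n} η(k/n) proj_{k−s}^{β+s,0}(∂_t^s f)(x,v)] dv, where ∂_t^m f(·,1) denotes the function ξ ↦ ∂_t^m f(ξ,1) on S^{d−1}, and Proj and proj with negative degree index are 0. -/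

import Mathlib

open MeasureTheory Finset

noncomputable section

/-- Pochhammer symbol `(x)_k`. -/
def poch (x : ℝ) (k : ℕ) : ℝ := (ascPochhammer ℝ k).eval x

/-- Jacobi polynomial `P_n^{(a,b)}` for real parameters. -/
def jacobiP (a b : ℝ) (n : ℕ) (t : ℝ) : ℝ :=
  (poch (a + 1) n / (n.factorial : ℝ)) *
    ∑ k ∈ Finset.range (n + 1),
      poch (-(n : ℝ)) k * poch ((n : ℝ) + a + b + 1) k /
        ((k.factorial : ℝ) * poch (a + 1) k) * ((1 - t) / 2) ^ k

/-- Normalizing constant `A_n^{(a,b)}`. -/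
def jacobiA (a b : ℝ) (n : ℕ) : ℝ := 2 ^ n / poch ((n : ℝ) + a + b + 1) n

/-- Normalized Jacobi polynomial `P̂_n^{(a,b)}`. -/
def jacobiPhat (a b : ℝ) (n : ℕ) (t : ℝ) : ℝ := jacobiA a b n * jacobiP a b n t

/-- The polynomials `J_n^{(a-s,b-s)}` (defined from the parameters `a, b > -1`). -/
def jacobiJ (a b : ℝ) (s n : ℕ) (t : ℝ) : ℝ :=
  if n < s then (1 + t) ^ n / (n.factorial : ℝ)
  else ∫ u in (-1 : ℝ)..t, (t - u) ^ (s - 1) / ((s - 1).factorial : ℝ) * jacobiPhat a b (n - s) u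

/-- Normalization constant `c_{a,b}`. -/
def cconst (a b : ℝ) : ℝ := Real.Gamma (a + b + 2) / (Real.Gamma (a + 1) * Real.Gamma (b + 1))

/-- Norm square `h_n^{(a,b)}`. -/
def hJac (a b : ℝ) (n : ℕ) : ℝ :=
  poch (a + 1) n * poch (b + 1) n * (a + b + n + 1) /
    ((n.factorial : ℝ) * poch (a + b + 2) n * (a + b + 2 * n + 1))

/-- Norm square `ĥ_n^{(a,b)}`. -/
def hHat (a b : ℝ) (n : ℕ) : ℝ := 2 ^ (a + b + 1) / cconst a b * (jacobiA a b n) ^ 2 * hJac a b n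

/-- The polynomials `J_n^{(a,-s)}`, built from `P̂^{(a+s,0)}`. -/
def jacobiJneg (a : ℝ) (s n : ℕ) (t : ℝ) : ℝ := jacobiJ (a + s) 0 s n t

/-- Euclidean space `ℝ^d`. -/
abbrev Euc (d : ℕ) : Type := EuclideanSpace ℝ (Fin d)

/-- The surface measure on the unit sphere `S^{d-1} ⊂ ℝ^d`. -/
def sphMeasure (d : ℕ) : Measure (Metric.sphere (0 : Euc d) 1) :=
  (volume : Measure (Euc d)).toSphere

/-- Surface area `ω_d` of the unit sphere. -/
def omegaS (d : ℕ) : ℝ := (sphMeasure d Set.univ).toReal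

/-- Integral over the sphere of a function defined on `ℝ^d`. -/
def sphInt (d : ℕ) (g : Euc d → ℝ) : ℝ := ∫ ξ, g (ξ : Euc d) ∂(sphMeasure d)

/-- The conic surface `V_0^{d+1} = {(x,t) : ‖x‖ = t, 0 ≤ t ≤ 1}` as a subset of `ℝ^d × ℝ`. -/
def coneSet (d : ℕ) : Set (Euc d × ℝ) := {p | ‖p.1‖ = p.2 ∧ 0 ≤ p.2 ∧ p.2 ≤ 1}

/-- The integral `∫_{V_0^{d+1}} f dm`. -/
def coneInt (d : ℕ) (f : Euc d × ℝ → ℝ) : ℝ :=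
  ∫ t in (0 : ℝ)..1, t ^ (d - 1) * sphInt d (fun ξ => f (t • ξ, t))

/-- `∂_t^k f`: the `k`-th partial derivative in the last variable `t`, with `x` fixed. -/
def pdT (k : ℕ) (f : Euc d × ℝ → ℝ) : Euc d × ℝ → ℝ :=
  fun p => iteratedDeriv k (fun τ => f (p.1, τ)) p.2

/-- A solid harmonic of degree `m` on `ℝ^d`: a homogeneous polynomial annihilated by the
Laplacian. -/
def IsSolidHarmonic (d m : ℕ) (Y : Euc d → ℝ) : Prop :=
  ∃ q : MvPolynomial (Fin d) ℝ, q.IsHomogeneous m ∧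
    (∑ i : Fin d, MvPolynomial.pderiv i (MvPolynomial.pderiv i q)) = 0 ∧
    ∀ x : Euc d, Y x = MvPolynomial.eval (fun i => x i) q

/-- The ordinary inner product `⟨f,g⟩_{β,γ}` on the conic surface. -/
def coneInner (d : ℕ) (β γ : ℝ) (f g : Euc d × ℝ → ℝ) : ℝ :=
  cconst (β + d - 1) γ / omegaS d *
    coneInt d (fun p => f p * g p * p.2 ^ β * (1 - p.2) ^ γ)

/-- The (classical) Jacobi basis polynomial `S_{m,Y}^{n,(β,γ)}` on the cone. -/
def coneS (d : ℕ) (β γ : ℝ) (n m : ℕ) (Y : Euc d → ℝ) : Euc d × ℝ → ℝ :=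
  fun p => jacobiP (2 * m + β + d - 1) γ (n - m) (1 - 2 * p.2) * Y p.1

/-- The norm square `h_{n,m}^{β,γ}`. -/
def coneH (d : ℕ) (β γ : ℝ) (n m : ℕ) : ℝ :=
  poch (β + d) (2 * m) / poch (β + γ + d + 1) (2 * m) * hJac (2 * m + β + d - 1) γ (n - m)

/-- The orthogonal projection `proj_n^{β,γ} f` built from an orthonormal spanning family of
solid harmonics. -/
def coneProj (d : ℕ) (N : ℕ → ℕ) (Y : (m : ℕ) → Fin (N m) → Euc d → ℝ) (β γ : ℝ) (n : ℕ)
    (f : Euc d × ℝ → ℝ) : Euc d × ℝ → ℝ :=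
  fun p => ∑ m ∈ Finset.range (n + 1), ∑ ℓ : Fin (N m),
    coneInner d β γ f (coneS d β γ n m (Y m ℓ)) / coneH d β γ n m * coneS d β γ n m (Y m ℓ) p

/-- The Sobolev inner product `⟨f,g⟩_{β,-s}` on the conic surface. -/
def coneSobInner (d : ℕ) (β : ℝ) (s : ℕ) (lam : ℕ → ℝ) (f g : Euc d × ℝ → ℝ) : ℝ :=
  (1 / omegaS d) * coneInt d (fun p => pdT s f p * pdT s g p * p.2 ^ (β + s)) +
    ∑ k ∈ Finset.range s, lam k / omegaS d *
      sphInt d (fun ξ => pdT k f (ξ, 1) * pdT k g (ξ, 1))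

/-- The Sobolev basis polynomial `S_{m,Y}^{n,(β,-s)}` on the cone. -/
def coneSS (d : ℕ) (β : ℝ) (s n m : ℕ) (Y : Euc d → ℝ) : Euc d × ℝ → ℝ :=
  fun p => jacobiJneg (2 * m + β + d - 1) s (n - m) (1 - 2 * p.2) * Y p.1

/-- The Sobolev norm square `h_{m,n}^{(β,-s)}`. -/
def coneSobH (d : ℕ) (β : ℝ) (s : ℕ) (lam : ℕ → ℝ) (n m : ℕ) : ℝ :=
  if n - m < s then 2 ^ (2 * (n - m)) * lam (n - m)
  else 2 ^ ((s : ℝ) - β - 2 * m - d) * hHat ((s : ℝ) + 2 * m + β + d - 1) 0 (n - m - s)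

/-- The Sobolev orthogonal projection `proj_n^{β,-s} f`. -/
def coneSobProj (d : ℕ) (N : ℕ → ℕ) (Y : (m : ℕ) → Fin (N m) → Euc d → ℝ) (β : ℝ) (s : ℕ)
    (lam : ℕ → ℝ) (n : ℕ) (f : Euc d × ℝ → ℝ) : Euc d × ℝ → ℝ :=
  fun p => ∑ m ∈ Finset.range (n + 1), ∑ ℓ : Fin (N m),
    coneSobInner d β s lam f (coneSS d β s n m (Y m ℓ)) / coneSobH d β s lam n m *
      coneSS d β s n m (Y m ℓ) p

/-- The spherical harmonic projection `Proj_k[g]` built from the orthonormal spanning family. -/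
def sphProj (d : ℕ) (N : ℕ → ℕ) (Y : (m : ℕ) → Fin (N m) → Euc d → ℝ) (k : ℕ)
    (g : Euc d → ℝ) : Euc d → ℝ :=
  fun x => ∑ ℓ : Fin (N k), (1 / omegaS d) * sphInt d (fun ξ => g ξ * Y k ℓ ξ) * Y k ℓ x

/-- Hypotheses: `(Y_ℓ^m)` is an orthonormal spanning family of solid harmonics. -/
def IsONBasisFamily (d : ℕ) (N : ℕ → ℕ) (Y : (m : ℕ) → Fin (N m) → Euc d → ℝ) : Prop :=
  (∀ m ℓ, IsSolidHarmonic d m (Y m ℓ)) ∧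
  (∀ m (ℓ ℓ' : Fin (N m)),
    (1 / omegaS d) * sphInt d (fun ξ => Y m ℓ ξ * Y m ℓ' ξ) = if ℓ = ℓ' then 1 else 0) ∧
  (∀ m (Z : Euc d → ℝ), IsSolidHarmonic d m Z →
    ∃ c : Fin (N m) → ℝ, ∀ x, Z x = ∑ ℓ : Fin (N m), c ℓ * Y m ℓ x)

/-!
For fixed `x`, a `C^s` function of `t` is the `s`-fold primitive of its `s`-th derivative with its
own Taylor data at `t = 1`, and the `s`-fold primitive is linear in the pair (data, derivative).
For a basis function `S_{m,Y}^{n,(β,-s)}` this pair is as simple as possible. If `n - m < s`, its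
`s`-th derivative vanishes and its data have the single nonzero entry `(-2)^(n-m) Y(x)`, of index
`n - m`. If `n - m ≥ s`, its data vanish and its `s`-th derivative is a multiple
`κ S_{m,Y}^{n-s,(β+s,0)}` of a classical basis function. The Sobolev inner product with `f` then
carries one factor `κ` (or `(-2)^(n-m) λ_{n-m}`) and the norm square carries `κ²` (or
`4^(n-m) λ_{n-m}`), so these factors cancel in each term of `proj_n^{β,-s} f`. Summing over the
basis, `proj_n^{β,-s} f` has Taylor data `Proj_{n-j}[∂_t^j f(·,1)]` and `s`-th derivative
`proj_{n-s}^{β+s,0}(∂_t^s f)`. The error formula is Taylor's formula for `f` minus the same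
formula for the projections.
-/

/-- The `s`-fold primitive of `g` with Taylor data `a` at `c`: for continuous `g`, the solution `u`
of the initial value problem `u^(s) = g`, `u^(i)(c) = a i` for `i < s`. Taking `a` to be an
infinite sequence, of which only `a 0, …, a (s - 1)` matter, makes the recursion a plain shift. -/
def iteratedPrimitive {E : Type*} [NormedAddCommGroup E] [NormedSpace ℝ E] (c : ℝ) :
    ℕ → (ℕ → E) → (ℝ → E) → ℝ → E
  | 0, _, g => g
  | s + 1, a, g => fun t ↦ a 0 + ∫ v in c..t, iteratedPrimitive c s (fun i ↦ a (i + 1)) g v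

section IteratedPrimitive

variable {E : Type*} [NormedAddCommGroup E] [NormedSpace ℝ E] {c : ℝ} {s : ℕ} {a b : ℕ → E}
  {g h : ℝ → E}

theorem iteratedPrimitive_congr (hab : ∀ i < s, a i = b i) :
    iteratedPrimitive c s a g = iteratedPrimitive c s b g := by
  induction s generalizing a b with
  | zero => rfl
  | succ s ih =>
    simp only [iteratedPrimitive, hab 0 s.succ_pos,
      ih fun i hi ↦ hab (i + 1) (Nat.succ_lt_succ hi)]

theorem continuous_iteratedPrimitive (hg : Continuous g) :
    Continuous (iteratedPrimitive c s a g) := by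
  induction s generalizing a with
  | zero => exact hg
  | succ s ih =>
    exact continuous_const.add
      (intervalIntegral.continuous_primitive (fun _ _ ↦ ih.intervalIntegrable _ _) c)

theorem iteratedPrimitive_smul (r : ℝ) :
    iteratedPrimitive c s (r • a) (r • g) = r • iteratedPrimitive c s a g := by
  induction s generalizing a with
  | zero => rfl
  | succ s ih =>
    ext t
    have ih' := ih (a := fun i ↦ a (i + 1))
    simp only [iteratedPrimitive, Pi.smul_apply, Pi.smul_def, smul_add,
      ← intervalIntegral.integral_smul] at ih' ⊢
    rw [ih']

theorem iteratedPrimitive_sub (hg : Continuous g) (hh : Continuous h) :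
    iteratedPrimitive c s (a - b) (g - h) =
      iteratedPrimitive c s a g - iteratedPrimitive c s b h := by
  induction s generalizing a b with
  | zero => rfl
  | succ s ih =>
    ext t
    have ih' := ih (a := fun i ↦ a (i + 1)) (b := fun i ↦ b (i + 1))
    have hsub := intervalIntegral.integral_sub (μ := volume)
      ((continuous_iteratedPrimitive (c := c) (s := s) (a := fun i ↦ a (i + 1)) hg
        ).intervalIntegrable c t)
      ((continuous_iteratedPrimitive (c := c) (s := s) (a := fun i ↦ b (i + 1)) hh
        ).intervalIntegrable c t)
    simp only [iteratedPrimitive, Pi.sub_apply, Pi.sub_def] at ih' ⊢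
    rw [ih', hsub]
    abel

theorem iteratedPrimitive_sum {ι : Type*} {K : Finset ι} {A : ι → ℕ → E} {G : ι → ℝ → E}
    (hG : ∀ k ∈ K, Continuous (G k)) :
    iteratedPrimitive c s (∑ k ∈ K, A k) (∑ k ∈ K, G k) =
      ∑ k ∈ K, iteratedPrimitive c s (A k) (G k) := by
  induction s generalizing A with
  | zero => rfl
  | succ s ih =>
    ext t
    have hA : (fun i ↦ (∑ k ∈ K, A k) (i + 1)) = ∑ k ∈ K, fun i ↦ A k (i + 1) := by
      ext i
      simp only [Finset.sum_apply]
    simp only [iteratedPrimitive, hA, ih]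
    simp only [Finset.sum_apply, sum_add_distrib]
    rw [intervalIntegral.integral_finsetSum fun k hk ↦
      (continuous_iteratedPrimitive (hG k hk)).intervalIntegrable c t]

theorem iteratedPrimitive_comp_add_mul (α κ t : ℝ) :
    iteratedPrimitive (α + κ * c) s a g (α + κ * t) =
      iteratedPrimitive c s (fun i ↦ κ ^ i • a i) (fun v ↦ κ ^ s • g (α + κ * v)) t := by
  induction s generalizing a t with
  | zero => simp [iteratedPrimitive]
  | succ s ih =>
    have hκ := iteratedPrimitive_smul (c := c) (s := s) (a := fun i ↦ κ ^ i • a (i + 1))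
      (g := fun v ↦ κ ^ s • g (α + κ * v)) κ
    simp only [Pi.smul_def, smul_smul, ← pow_succ'] at hκ
    simp only [iteratedPrimitive, pow_zero, one_smul, hκ, intervalIntegral.integral_smul]
    rw [← intervalIntegral.smul_integral_comp_add_mul]
    simp only [ih]

section CompleteSpace

variable [CompleteSpace E]

theorem hasDerivAt_iteratedPrimitive_succ (hg : Continuous g) (t : ℝ) :
    HasDerivAt (iteratedPrimitive c (s + 1) a g)
      (iteratedPrimitive c s (fun i ↦ a (i + 1)) g t) t :=
  ((continuous_iteratedPrimitive hg).integral_hasStrictDerivAt c t).hasDerivAt.const_add (a 0)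

theorem deriv_iteratedPrimitive_succ (hg : Continuous g) :
    deriv (iteratedPrimitive c (s + 1) a g) = iteratedPrimitive c s (fun i ↦ a (i + 1)) g :=
  deriv_eq (hasDerivAt_iteratedPrimitive_succ hg)

theorem contDiff_iteratedPrimitive (hg : Continuous g) :
    ContDiff ℝ s (iteratedPrimitive c s a g) := by
  induction s generalizing a with
  | zero => exact contDiff_zero.2 hg
  | succ s ih =>
    rw [Nat.cast_succ, contDiff_succ_iff_deriv, deriv_iteratedPrimitive_succ hg]
    exact ⟨fun t ↦ (hasDerivAt_iteratedPrimitive_succ hg t).differentiableAt, by simp, ih⟩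

theorem iteratedDeriv_iteratedPrimitive_add (hg : Continuous g) (i j : ℕ) :
    iteratedDeriv i (iteratedPrimitive c (j + i) a g) =
      iteratedPrimitive c j (fun k ↦ a (k + i)) g := by
  induction i generalizing a with
  | zero => rfl
  | succ i ih =>
    rw [iteratedDeriv_succ', ← add_assoc, deriv_iteratedPrimitive_succ hg, ih]
    rfl

theorem iteratedDeriv_iteratedPrimitive_self (hg : Continuous g) :
    iteratedDeriv s (iteratedPrimitive c s a g) = g := by
  simpa only [zero_add, iteratedPrimitive] using
    iteratedDeriv_iteratedPrimitive_add (c := c) (a := a) hg s 0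

theorem iteratedDeriv_iteratedPrimitive_center (hg : Continuous g) {i : ℕ} (hi : i < s) :
    iteratedDeriv i (iteratedPrimitive c s a g) c = a i := by
  obtain ⟨j, rfl⟩ := Nat.exists_eq_add_of_le' hi
  rw [show j + i.succ = j + 1 + i by omega, iteratedDeriv_iteratedPrimitive_add hg]
  simp [iteratedPrimitive]

theorem iteratedPrimitive_iteratedDeriv {f : ℝ → E} (hf : ContDiff ℝ s f) :
    iteratedPrimitive c s (fun i ↦ iteratedDeriv i f c) (iteratedDeriv s f) = f := by
  induction s generalizing f with
  | zero => rfl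
  | succ s ih =>
    rw [Nat.cast_succ, contDiff_succ_iff_deriv] at hf
    ext t
    simp only [iteratedPrimitive, iteratedDeriv_succ', ih hf.2.2, iteratedDeriv_zero]
    rw [intervalIntegral.integral_deriv_eq_sub (fun v _ ↦ hf.1 v)
      (hf.2.2.continuous.intervalIntegrable _ _)]
    abel

theorem eq_taylor_sum_add_integral {f : ℝ → E} {r : ℕ} (hf : ContDiff ℝ (r + 1 : ℕ) f)
    (c t : ℝ) :
    f t = ∑ m ∈ range (r + 1), ((t - c) ^ m / (m.factorial : ℝ)) • iteratedDeriv m f c +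
      ∫ v in c..t, ((t - v) ^ r / (r.factorial : ℝ)) • iteratedDeriv (r + 1) f v := by
  rcases eq_or_ne c t with rfl | hne
  · simp [sum_range_succ']
  have hu : UniqueDiffOn ℝ (Set.uIcc c t) := uniqueDiffOn_uIcc hne
  have hwithin : ∀ m ≤ r + 1, ∀ v ∈ Set.uIcc c t,
      iteratedDerivWithin m f (Set.uIcc c t) v = iteratedDeriv m f v := fun m hm v hv ↦
    iteratedDerivWithin_eq_iteratedDeriv hu (hf.of_le (mod_cast hm)).contDiffAt hv
  rw [sub_eq_iff_eq_add'.1 (taylor_integral_remainder (hf.contDiffOn (s := Set.uIcc c t))),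
    taylor_within_apply]
  congr 1
  · refine sum_congr rfl fun m hm ↦ ?_
    rw [hwithin m (mem_range.1 hm).le c Set.left_mem_uIcc, div_eq_inv_mul]
  · exact intervalIntegral.integral_congr fun v hv ↦ by simp only [hwithin _ le_rfl v hv]

theorem iteratedPrimitive_eq_sum_add_integral (hs : 1 ≤ s) (hg : Continuous g) (t : ℝ) :
    iteratedPrimitive c s a g t =
      ∑ m ∈ range s, ((t - c) ^ m / (m.factorial : ℝ)) • a m +
        ∫ v in c..t, ((t - v) ^ (s - 1) / ((s - 1).factorial : ℝ)) • g v := by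
  obtain ⟨r, rfl⟩ := Nat.exists_eq_add_of_le' hs
  rw [eq_taylor_sum_add_integral (contDiff_iteratedPrimitive hg) c t,
    iteratedDeriv_iteratedPrimitive_self hg, Nat.add_sub_cancel]
  congr 1
  exact sum_congr rfl fun m hm ↦ by
    rw [iteratedDeriv_iteratedPrimitive_center hg (mem_range.1 hm)]

end CompleteSpace

theorem integral_sub_pow_smul_symm (hs : 1 ≤ s) (t : ℝ) :
    ∫ v in c..t, ((t - v) ^ (s - 1) / ((s - 1).factorial : ℝ)) • g v =
      (-1 : ℝ) ^ s • ∫ v in t..c, ((v - t) ^ (s - 1) / ((s - 1).factorial : ℝ)) • g v := by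
  obtain ⟨r, rfl⟩ := Nat.exists_eq_add_of_le' hs
  rw [intervalIntegral.integral_symm, pow_succ, mul_neg_one, neg_smul,
    ← intervalIntegral.integral_smul]
  congr! 3 with v
  rw [smul_smul, ← neg_sub v t, neg_pow (v - t), Nat.add_sub_cancel, mul_div_assoc]

end IteratedPrimitive

theorem continuous_jacobiP (a b : ℝ) (n : ℕ) : Continuous (jacobiP a b n) := by
  unfold jacobiP
  fun_prop

theorem continuous_jacobiPhat (a b : ℝ) (n : ℕ) : Continuous (jacobiPhat a b n) :=
  continuous_const.mul (continuous_jacobiP a b n)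

theorem poch_pos {x : ℝ} (hx : 0 < x) (k : ℕ) : 0 < poch x k := ascPochhammer_pos k x hx

theorem poch_mul_add (x : ℝ) (k : ℕ) : poch x k * (x + k) = x * poch (x + 1) k := by
  unfold poch
  rw [← ascPochhammer_succ_eval, ascPochhammer_succ_left]
  simp

theorem jacobiA_pos {a b : ℝ} {n : ℕ} (h : 0 < n + a + b + 1) : 0 < jacobiA a b n :=
  div_pos (by positivity) (poch_pos h n)

theorem cconst_zero_right {a : ℝ} (ha : 0 < a + 1) : cconst a 0 = a + 1 := by
  unfold cconst
  rw [add_zero, zero_add, Real.Gamma_one, mul_one, show a + 2 = a + 1 + 1 by ring,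
    Real.Gamma_add_one ha.ne', mul_div_cancel_right₀ _ (Real.Gamma_pos_of_pos ha).ne']

theorem jacobiJneg_eq_iteratedPrimitive (a : ℝ) {s : ℕ} (hs : 1 ≤ s) (n : ℕ) :
    jacobiJneg a s n = iteratedPrimitive (-1) s (Pi.single n 1)
      (fun u ↦ if n < s then 0 else jacobiPhat (a + s) 0 (n - s) u) := by
  ext t
  unfold jacobiJneg jacobiJ
  by_cases h : n < s
  · simp only [if_pos h]
    rw [iteratedPrimitive_eq_sum_add_integral hs continuous_const]
    simp [Pi.single_apply, h, add_comm]
  · simp only [if_neg h]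
    rw [iteratedPrimitive_eq_sum_add_integral hs (continuous_jacobiPhat _ _ _),
      sum_eq_zero, zero_add]
    · rfl
    · intro m hm
      rw [Pi.single_eq_of_ne (by rintro rfl; exact h (mem_range.1 hm)), smul_zero]

section ConeBasis

variable {d s n m : ℕ} {β : ℝ} {lam : ℕ → ℝ} {Y : Euc d → ℝ} {f : Euc d × ℝ → ℝ}

theorem continuous_coneS (x : Euc d) :
    Continuous fun v : ℝ ↦ coneS d β 0 n m Y (x, v) :=
  ((continuous_jacobiP _ _ _).comp (by fun_prop)).mul_const (Y x)

theorem continuous_ite_mul_coneS (p : Prop) [Decidable p] (r : ℝ) (x : Euc d) :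
    Continuous fun v : ℝ ↦ if p then 0 else r * coneS d β 0 n m Y (x, v) :=
  continuous_if_const _ (fun _ ↦ continuous_const) fun _ ↦ (continuous_coneS x).const_mul r

/-- The factor `κ` in `∂_t^s S_{m,Y}^{n,(β,-s)} = κ S_{m,Y}^{n-s,(β+s,0)}`, which relates the
Sobolev basis to the classical one. -/
def sobScale (d : ℕ) (β : ℝ) (s n m : ℕ) : ℝ :=
  (-2) ^ s * jacobiA (2 * m + (β + s) + d - 1) 0 (n - s - m)

theorem sobScale_ne_zero (hβ : 0 < β + s + d) : sobScale d β s n m ≠ 0 := by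
  refine mul_ne_zero (by positivity) (jacobiA_pos ?_).ne'
  have : (0 : ℝ) ≤ ((n - s - m : ℕ) : ℝ) + 2 * m := by positivity
  linarith

theorem coneSS_eq_iteratedPrimitive (hs : 1 ≤ s) (x : Euc d) :
    (fun v ↦ coneSS d β s n m Y (x, v)) =
      iteratedPrimitive 1 s (fun i ↦ if i = n - m then (-2) ^ (n - m) * Y x else 0)
        (fun v ↦ if n - m < s then 0
          else sobScale d β s n m * coneS d (β + s) 0 (n - s) m Y (x, v)) := by
  have hparam : 2 * (m : ℝ) + β + d - 1 + s = 2 * m + (β + s) + d - 1 := by ring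
  ext v
  simp only [coneSS, coneS, sobScale, jacobiJneg_eq_iteratedPrimitive _ hs, hparam,
    tsub_right_comm (a := n) (b := s)]
  have haff := iteratedPrimitive_comp_add_mul (c := 1) (s := s) (a := Pi.single (n - m) (1 : ℝ))
    (g := fun u ↦ if n - m < s then 0
      else jacobiPhat (2 * m + (β + s) + d - 1) 0 (n - m - s) u) 1 (-2) v
  rw [show (1 : ℝ) + -2 * 1 = -1 by norm_num, show 1 + -2 * v = 1 - 2 * v by ring] at haff
  rw [haff, mul_comm, ← smul_eq_mul, ← Pi.smul_apply, ← iteratedPrimitive_smul]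
  congr 1
  · ext i
    by_cases hi : i = n - m <;> simp [hi, mul_comm]
  · ext u
    by_cases h : n - m < s
    · simp [h]
    · simp only [h, if_false, Pi.smul_apply, smul_eq_mul, jacobiPhat, neg_mul, ← sub_eq_add_neg]
      ring

theorem pdT_coneSS_self (hs : 1 ≤ s) (p : Euc d × ℝ) :
    pdT s (coneSS d β s n m Y) p =
      if n - m < s then 0 else sobScale d β s n m * coneS d (β + s) 0 (n - s) m Y p := by
  unfold pdT
  rw [coneSS_eq_iteratedPrimitive hs,
    iteratedDeriv_iteratedPrimitive_self (continuous_ite_mul_coneS _ _ _)]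

theorem pdT_coneSS_one (hs : 1 ≤ s) {i : ℕ} (hi : i < s) (x : Euc d) :
    pdT i (coneSS d β s n m Y) (x, 1) = if i = n - m then (-2) ^ (n - m) * Y x else 0 := by
  unfold pdT
  rw [coneSS_eq_iteratedPrimitive hs,
    iteratedDeriv_iteratedPrimitive_center (continuous_ite_mul_coneS _ _ _) hi]

theorem sphInt_const_mul (r : ℝ) (g : Euc d → ℝ) :
    sphInt d (fun ξ ↦ r * g ξ) = r * sphInt d g :=
  integral_const_mul _ _

theorem coneInt_const_mul (r : ℝ) (g : Euc d × ℝ → ℝ) :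
    coneInt d (fun p ↦ r * g p) = r * coneInt d g := by
  simp only [coneInt, sphInt_const_mul, mul_left_comm _ r, intervalIntegral.integral_const_mul]

theorem coneSobInner_coneSS_of_lt (hs : 1 ≤ s) (h : n - m < s) :
    coneSobInner d β s lam f (coneSS d β s n m Y) =
      (-2) ^ (n - m) * lam (n - m) *
        ((1 / omegaS d) * sphInt d (fun ξ ↦ pdT (n - m) f (ξ, 1) * Y ξ)) := by
  have hcone : coneInt d
      (fun p ↦ pdT s f p * pdT s (coneSS d β s n m Y) p * p.2 ^ (β + s)) = 0 := by
    simp [pdT_coneSS_self hs, h, coneInt, sphInt]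
  unfold coneSobInner
  rw [hcone, mul_zero, zero_add, sum_eq_single_of_mem _ (mem_range.2 h)]
  · simp only [pdT_coneSS_one hs h, if_true, mul_left_comm _ ((-2 : ℝ) ^ (n - m)),
      sphInt_const_mul]
    ring
  · intro i hi hne
    simp [pdT_coneSS_one hs (mem_range.1 hi), hne, sphInt]

theorem coneSobInner_coneSS_of_le (hs : 1 ≤ s) (hβ : 0 < β + s + d) (h : s ≤ n - m) :
    (β + s + d) * coneSobInner d β s lam f (coneSS d β s n m Y) =
      sobScale d β s n m * coneInner d (β + s) 0 (pdT s f) (coneS d (β + s) 0 (n - s) m Y) := by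
  have hsph : ∑ i ∈ range s, lam i / omegaS d *
      sphInt d (fun ξ ↦ pdT i f (ξ, 1) * pdT i (coneSS d β s n m Y) (ξ, 1)) = 0 := by
    refine sum_eq_zero fun i hi ↦ ?_
    have hi := mem_range.1 hi
    simp [pdT_coneSS_one hs hi, (hi.trans_le h).ne, sphInt]
  unfold coneSobInner coneInner
  rw [hsph, cconst_zero_right (by linarith)]
  simp only [pdT_coneSS_self hs, if_neg h.not_gt, mul_left_comm _ (sobScale d β s n m), mul_assoc,
    coneInt_const_mul, Real.rpow_zero, mul_one]
  ring

theorem coneSobH_of_lt (h : n - m < s) :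
    coneSobH d β s lam n m = ((-2) ^ (n - m)) ^ 2 * lam (n - m) := by
  rw [coneSobH, if_pos h, ← pow_mul', (even_two_mul _).neg_pow]

theorem coneH_zero_right (hβ : 0 < β + d) :
    coneH d β 0 n m = (β + d) / (β + d + 2 * m) * hJac (2 * m + β + d - 1) 0 (n - m) := by
  have hp := poch_pos (add_pos hβ one_pos) (2 * m)
  have hD : 0 < β + d + 2 * m := by positivity
  have hratio := poch_mul_add (β + d) (2 * m)
  push_cast at hratio
  rw [coneH, add_zero, (div_eq_div_iff hp.ne' hD.ne').2 hratio]

theorem coneSobH_of_le (hβ : 0 < β + s + d) (h : s ≤ n - m) :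
    (β + s + d) * coneSobH d β s lam n m =
      sobScale d β s n m ^ 2 * coneH d (β + s) 0 (n - s) m := by
  have hparam : (s : ℝ) + 2 * m + β + d - 1 = 2 * m + (β + s) + d - 1 := by ring
  have hpow : (2 : ℝ) ^ ((s : ℝ) - β - 2 * m - d) * 2 ^ (2 * m + (β + s) + d - 1 + 0 + 1) =
      ((-2) ^ s) ^ 2 := by
    rw [← Real.rpow_add two_pos, ← pow_mul', (even_two_mul s).neg_pow, ← Real.rpow_natCast]
    push_cast
    ring_nf
  have hc : cconst (2 * m + (β + s) + d - 1) 0 = β + s + d + 2 * m := by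
    rw [cconst_zero_right] <;> linarith
  rw [coneSobH, if_neg h.not_gt, hHat, hparam, hc, tsub_right_comm (a := n), sobScale, mul_pow,
    ← hpow, coneH_zero_right hβ]
  field_simp

theorem coneSobInner_div_mul_coneSS (hs : 1 ≤ s) (hβ : 0 < β + s + d)
    (hlam : ∀ i < s, lam i ≠ 0) (x : Euc d) :
    (fun v ↦ coneSobInner d β s lam f (coneSS d β s n m Y) / coneSobH d β s lam n m *
        coneSS d β s n m Y (x, v)) =
      iteratedPrimitive 1 s
        (fun i ↦ if i = n - m then
          (1 / omegaS d) * sphInt d (fun ξ ↦ pdT i f (ξ, 1) * Y ξ) * Y x else 0)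
        (fun v ↦ if n - m < s then 0 else
          coneInner d (β + s) 0 (pdT s f) (coneS d (β + s) 0 (n - s) m Y) /
            coneH d (β + s) 0 (n - s) m * coneS d (β + s) 0 (n - s) m Y (x, v)) := by
  set q := coneSobInner d β s lam f (coneSS d β s n m Y) / coneSobH d β s lam n m with hq
  change q • (fun v ↦ coneSS d β s n m Y (x, v)) = _
  rw [coneSS_eq_iteratedPrimitive hs, ← iteratedPrimitive_smul]
  rcases lt_or_ge (n - m) s with h | h
  · have hl := hlam _ h
    rw [coneSobInner_coneSS_of_lt hs h, coneSobH_of_lt h] at hq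
    congr 1
    · ext i
      by_cases hi : i = n - m
      · subst hi
        simp only [Pi.smul_apply, smul_eq_mul, if_true, hq]
        field_simp
      · simp [hi]
    · ext v
      simp [h]
  · rw [iteratedPrimitive_congr (b := fun i ↦ if i = n - m then
          (1 / omegaS d) * sphInt d (fun ξ ↦ pdT i f (ξ, 1) * Y ξ) * Y x else 0)
        fun i hi ↦ by simp [(hi.trans_le h).ne]]
    rw [← mul_div_mul_left _ _ hβ.ne', coneSobInner_coneSS_of_le hs hβ h,
      coneSobH_of_le hβ h] at hq
    have hκ := sobScale_ne_zero (n := n) (m := m) hβ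
    congr 1
    ext v
    simp only [Pi.smul_apply, smul_eq_mul, if_neg h.not_gt, hq]
    field_simp

end ConeBasis

theorem sum_range_succ_ite_sub_lt {M : Type*} [AddCommMonoid M] (F : ℕ → M) (k s : ℕ) :
    ∑ m ∈ range (k + 1), (if k - m < s then 0 else F m) =
      if k < s then 0 else ∑ m ∈ range (k - s + 1), F m := by
  split_ifs with h
  · exact sum_eq_zero fun m _ ↦ if_pos (by omega)
  · rw [← sum_subset (range_mono (show k - s + 1 ≤ k + 1 by omega))]
    · refine sum_congr rfl fun m hm ↦ if_neg ?_
      have := mem_range.1 hm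
      omega
    · refine fun m hm hm' ↦ if_pos ?_
      rw [mem_range] at hm hm'
      omega

theorem sum_range_succ_ite_eq_sub {M : Type*} [AddCommMonoid M] (F : ℕ → M) (k j : ℕ) :
    ∑ m ∈ range (k + 1), (if j = k - m then F m else 0) = if k < j then 0 else F (k - j) := by
  split_ifs with h
  · exact sum_eq_zero fun m _ ↦ if_neg (by omega)
  · rw [sum_eq_single_of_mem (k - j) (mem_range.2 (by omega)), if_pos (by omega)]
    intro m hm hne
    have := mem_range.1 hm
    exact if_neg (by omega)

section ConeProjection

variable {d s : ℕ} {β : ℝ} {lam : ℕ → ℝ} {N : ℕ → ℕ} {Y : (m : ℕ) → Fin (N m) → Euc d → ℝ}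
  {f : Euc d × ℝ → ℝ}

theorem continuous_coneProj (k : ℕ) (x : Euc d) :
    Continuous fun v : ℝ ↦ coneProj d N Y β 0 k f (x, v) :=
  continuous_finsetSum _ fun _ _ ↦ continuous_finsetSum _ fun _ _ ↦
    (continuous_coneS x).const_mul _

theorem coneSobProj_eq_iteratedPrimitive (hs : 1 ≤ s) (hβ : 0 < β + s + d)
    (hlam : ∀ i < s, lam i ≠ 0) (k : ℕ) (x : Euc d) :
    (fun v ↦ coneSobProj d N Y β s lam k f (x, v)) =
      iteratedPrimitive 1 s
        (fun j ↦ if k < j then 0 else sphProj d N Y (k - j) (fun ξ ↦ pdT j f (ξ, 1)) x)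
        (fun v ↦ if k < s then 0
          else coneProj d N Y (β + s) 0 (k - s) (pdT s f) (x, v)) := by
  have hcont (m : ℕ) (ℓ : Fin (N m)) : Continuous fun v : ℝ ↦ if k - m < s then 0 else
      coneInner d (β + s) 0 (pdT s f) (coneS d (β + s) 0 (k - s) m (Y m ℓ)) /
        coneH d (β + s) 0 (k - s) m * coneS d (β + s) 0 (k - s) m (Y m ℓ) (x, v) :=
    continuous_ite_mul_coneS _ _ x
  calc (fun v ↦ coneSobProj d N Y β s lam k f (x, v))
    _ = ∑ m ∈ range (k + 1), ∑ ℓ : Fin (N m), fun v ↦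
          coneSobInner d β s lam f (coneSS d β s k m (Y m ℓ)) / coneSobH d β s lam k m *
            coneSS d β s k m (Y m ℓ) (x, v) := by
      ext v
      simp only [coneSobProj, Finset.sum_apply]
    _ = _ := by
      simp only [coneSobInner_div_mul_coneSS hs hβ hlam]
      simp only [← iteratedPrimitive_sum fun ℓ _ ↦ hcont _ ℓ]
      rw [← iteratedPrimitive_sum fun m _ ↦ ?_]
      · congr 1
        · ext j
          refine Eq.trans ?_ (sum_range_succ_ite_eq_sub
            (fun m ↦ sphProj d N Y m (fun ξ ↦ pdT j f (ξ, 1)) x) k j)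
          simp only [Finset.sum_apply]
          refine sum_congr rfl fun m _ ↦ ?_
          split_ifs with hj <;> simp [sphProj]
        · ext v
          rw [coneProj, ← sum_range_succ_ite_sub_lt]
          simp only [Finset.sum_apply]
          refine sum_congr rfl fun m _ ↦ ?_
          split_ifs with hj <;> simp
      · rw [sum_fn]
        exact continuous_finsetSum _ fun ℓ _ ↦ hcont m ℓ

theorem iteratedPrimitive_pdT {x : Euc d} (hf : ContDiff ℝ s fun τ ↦ f (x, τ)) (t : ℝ) :
    iteratedPrimitive 1 s (fun m ↦ pdT m f (x, 1)) (fun v ↦ pdT s f (x, v)) t = f (x, t) :=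
  congrFun (iteratedPrimitive_iteratedDeriv hf) t

theorem coneSob_Q_error_general [NeZero d] (hs : 1 ≤ s) (hβ : -(d : ℝ) - s < β)
    (hlam : ∀ i < s, lam i ≠ 0) (_hY : ∀ m ℓ, IsSolidHarmonic d m (Y m ℓ)) (K : Finset ℕ)
    (w : ℕ → ℝ) (hf : ContDiff ℝ s f) (x : Euc d) (t : ℝ) :
    f (x, t) - ∑ k ∈ K, w k * coneSobProj d N Y β s lam k f (x, t) =
      ∑ m ∈ range s, (t - 1) ^ m / (m.factorial : ℝ) *
          (pdT m f (x, 1) - ∑ k ∈ K, w k *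
            (if k < m then 0 else sphProj d N Y (k - m) (fun ξ ↦ pdT m f (ξ, 1)) x)) +
        (-1 : ℝ) ^ s * ∫ v in t..(1 : ℝ), (v - t) ^ (s - 1) / ((s - 1).factorial : ℝ) *
          (pdT s f (x, v) - ∑ k ∈ K, w k *
            (if k < s then 0 else coneProj d N Y (β + s) 0 (k - s) (pdT s f) (x, v))) := by
  set G : ℕ → ℝ → ℝ := fun k v ↦
    if k < s then 0 else coneProj d N Y (β + s) 0 (k - s) (pdT s f) (x, v)
  set A : ℕ → ℕ → ℝ := fun k m ↦
    if k < m then 0 else sphProj d N Y (k - m) (fun ξ ↦ pdT m f (ξ, 1)) x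
  have hG (k : ℕ) : Continuous (w k • G k) :=
    (continuous_if_const _ (fun _ ↦ continuous_const)
      fun _ ↦ continuous_coneProj (k - s) x).const_smul (w k)
  have hsum : Continuous (∑ k ∈ K, w k • G k) := by
    rw [sum_fn]
    exact continuous_finsetSum _ fun k _ ↦ hG k
  have hfx : ContDiff ℝ s fun τ ↦ f (x, τ) := hf.comp (contDiff_prodMk_right x)
  have hpdT : Continuous fun v ↦ pdT s f (x, v) := hfx.continuous_iteratedDeriv' s
  have hβ' : 0 < β + s + d := by linarith
  have hproj (k : ℕ) :
      coneSobProj d N Y β s lam k f (x, t) = iteratedPrimitive 1 s (A k) (G k) t :=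
    congrFun (coneSobProj_eq_iteratedPrimitive hs hβ' hlam k x) t
  calc f (x, t) - ∑ k ∈ K, w k * coneSobProj d N Y β s lam k f (x, t)
    _ = iteratedPrimitive 1 s ((fun m ↦ pdT m f (x, 1)) - ∑ k ∈ K, w k • A k)
          ((fun v ↦ pdT s f (x, v)) - ∑ k ∈ K, w k • G k) t := by
      rw [iteratedPrimitive_sub hpdT hsum, iteratedPrimitive_sum fun k _ ↦ hG k]
      simp only [Pi.sub_apply, Finset.sum_apply, iteratedPrimitive_smul, Pi.smul_apply,
        smul_eq_mul, iteratedPrimitive_pdT hfx, hproj]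
    _ = _ := by
      rw [iteratedPrimitive_eq_sum_add_integral hs (hpdT.sub hsum),
        integral_sub_pow_smul_symm hs]
      simp only [Pi.sub_apply, Finset.sum_apply, Pi.smul_apply, smul_eq_mul]
      rfl

end ConeProjection

/-- error formula for the near-best approximation operator `Q_{n,η}^{(β,-s)}`. -/
theorem coneSob_Q_error (d : ℕ) (hd : 2 ≤ d) (s : ℕ) (hs : 1 ≤ s) (β : ℝ)
    (hβ : -(d : ℝ) - s < β) (lam : ℕ → ℝ) (hlam : ∀ k, k ≤ s - 1 → 0 < lam k)
    (N : ℕ → ℕ) (Y : (m : ℕ) → Fin (N m) → Euc d → ℝ) (hY : IsONBasisFamily d N Y)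
    (η : ℝ → ℝ) (hη : ContDiff ℝ (⊤ : ℕ∞) η) (hη1 : ∀ u ∈ Set.Icc (0 : ℝ) 1, η u = 1)
    (hη0 : ∀ u : ℝ, 2 ≤ u → η u = 0)
    (n : ℕ) (hn : 1 ≤ n)
    (f : Euc d × ℝ → ℝ) (hf : ContDiff ℝ s f)
    (x : Euc d) (t : ℝ) (ht : t ∈ Set.Icc (0 : ℝ) 1) :
    f (x, t) - (∑ k ∈ Finset.range (2 * n + 1), η ((k : ℝ) / n) *
        coneSobProj d N Y β s lam k f (x, t))
      = (∑ m ∈ Finset.range s, (t - 1) ^ m / (m.factorial : ℝ) *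
          (pdT m f (x, 1)
            - ∑ k ∈ Finset.range (2 * n + 1), η ((k : ℝ) / n) *
                (if k < m then 0
                  else sphProj d N Y (k - m) (fun ξ => pdT m f (ξ, 1)) x)))
        + (-1 : ℝ) ^ s * ∫ v in t..(1 : ℝ), (v - t) ^ (s - 1) / ((s - 1).factorial : ℝ) *
            (pdT s f (x, v)
              - ∑ k ∈ Finset.range (2 * n + 1), η ((k : ℝ) / n) *
                  (if k < s then 0
                    else coneProj d N Y (β + s) 0 (k - s) (pdT s f) (x, v))) := by
  have : NeZero d := ⟨by omega⟩
  exact coneSob_Q_error_general hs hβ (fun k hk ↦ (hlam k (Nat.le_sub_one_of_lt hk)).ne') hY.1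
    _ _ hf x t

end
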